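/- arXiv:2101.06847 — 4 statements merged into one kernel-verified Lean document; each statement's English description precedes it below -/
import Mathlib

section
/- Let d ≥ 1 and let x, x' ∈ ℝ^d with ‖x − x'‖ = Δx where 0 ≤ Δx ≤ 2. The Lebesgue volume of the intersection of the two closed unit balls centered at x and at x' equals (π^(d/2) / Γ(1 + d/2)) · I_{1−(Δx/2)²}((d+1)/2, 1/2). -/
/-! The intersection of the balls is symmetric about the hyperplane bisecting the segment from `x`
to `x'`. Put `δ = ‖x - x'‖ / 2` and `d = n + 1`. An affine isometry moves the centers to
`(±δ, 0) ∈ ℝ × ℝⁿ` (`exists_measurePreserving_lens`), where the slice at height `t` is the `n`-ball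
of radius `√(1 - (|t| + δ)²)`, empty when `|t| + δ > 1` (`lens_slice`). With `ω` the volume of the
unit `n`-ball, Fubini's theorem gives the volume `2 ω ∫_δ^1 (1 - s²)^(n/2) ds` (`volume_lens`), and
the substitution `t = 1 - s²` turns it into `ω ∫_0^(1 - δ²) t^(n/2) (1 - t)^(-1/2) dt`
(`integral_substitution`).

No evaluation of the beta function is needed: the case `δ = 0` of the same formula says that
`ω B((d+1)/2, 1/2)` is the volume of the unit `d`-ball, which is known, so dividing the two
formulas yields the regularized incomplete beta function. -/

open MeasureTheory Real

/-- The regularized incomplete beta function `I_z(a,b)`. -/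
noncomputable def regIncBeta (a b z : ℝ) : ℝ :=
  (∫ t in (0:ℝ)..z, t ^ (a - 1) * (1 - t) ^ (b - 1)) /
  (∫ t in (0:ℝ)..1, t ^ (a - 1) * (1 - t) ^ (b - 1))

/-- The intersection of the closed unit balls centered at `(δ, 0)` and `(-δ, 0)` in `ℝ × F`,
where `ℝ × F` is thought of as carrying the `L²` norm (the product type itself has the sup norm,
so the balls are written out through squared distances). -/
def lens (F : Type*) [NormedAddCommGroup F] (δ : ℝ) : Set (ℝ × F) :=
  {p | (p.1 - δ) ^ 2 + ‖p.2‖ ^ 2 ≤ 1 ∧ (p.1 + δ) ^ 2 + ‖p.2‖ ^ 2 ≤ 1}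

lemma measurableSet_lens (n : ℕ) (δ : ℝ) :
    MeasurableSet (lens (EuclideanSpace ℝ (Fin n)) δ) := by
  rw [lens, Set.ofPred_and]
  exact ((isClosed_le (by fun_prop) continuous_const).inter
    (isClosed_le (by fun_prop) continuous_const)).measurableSet

/-- A volume-preserving change of coordinates which brings the two balls into standard position.
Its linear part is an isometry onto `ℝ × ℝⁿ` followed by a reflection; some reflection exchanges any
two given vectors of equal norm. -/
lemma exists_measurePreserving_lens (n : ℕ) (x x' : EuclideanSpace ℝ (Fin (n + 1))) :
    ∃ T : EuclideanSpace ℝ (Fin (n + 1)) → ℝ × EuclideanSpace ℝ (Fin n),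
      MeasurePreserving T ∧
      T ⁻¹' lens _ (‖x - x'‖ / 2) = Metric.closedBall x 1 ∩ Metric.closedBall x' 1 := by
  have hfin : Module.finrank ℝ (EuclideanSpace ℝ (Fin (n + 1))) =
      Module.finrank ℝ (WithLp 2 (ℝ × EuclideanSpace ℝ (Fin n))) := by
    rw [(WithLp.linearEquiv 2 ℝ (ℝ × EuclideanSpace ℝ (Fin n))).finrank_eq]
    simp; ring
  let ψ : EuclideanSpace ℝ (Fin (n + 1)) ≃ₗᵢ[ℝ]
      WithLp 2 (ℝ × EuclideanSpace ℝ (Fin n)) :=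
    (stdOrthonormalBasis ℝ _).equiv (stdOrthonormalBasis ℝ _) (finCongr hfin)
  let w : WithLp 2 (ℝ × EuclideanSpace ℝ (Fin n)) := WithLp.toLp 2 (‖x - x'‖, 0)
  have hw : ‖ψ (x - x')‖ = ‖w‖ := by
    rw [ψ.norm_map, ← sq_eq_sq₀ (norm_nonneg _) (norm_nonneg _), WithLp.prod_norm_sq_eq_of_L2]
    simp [w]
  let L : EuclideanSpace ℝ (Fin (n + 1)) ≃ₗᵢ[ℝ]
      WithLp 2 (ℝ × EuclideanSpace ℝ (Fin n)) := ψ.trans ((ℝ ∙ (ψ (x - x') - w))ᗮ.reflection)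
  have hL : L (x - x') = w := Submodule.reflection_sub hw
  let m : EuclideanSpace ℝ (Fin (n + 1)) := (2⁻¹ : ℝ) • (x + x')
  have h1 : L (x - m) = WithLp.toLp 2 (‖x - x'‖ / 2, 0) := by
    have : x - m = (2⁻¹ : ℝ) • (x - x') := by simp only [m]; module
    rw [this, map_smul, hL]
    apply (WithLp.ofLp_injective 2)
    ext <;> simp [w] <;> ring
  have h2 : L (x' - m) = WithLp.toLp 2 (-(‖x - x'‖ / 2), 0) := by
    have : x' - m = (-2⁻¹ : ℝ) • (x - x') := by simp only [m]; module
    rw [this, map_smul, hL]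
    apply (WithLp.ofLp_injective 2)
    ext <;> simp [w] <;> ring
  refine ⟨fun y => WithLp.ofLp (L (y - m)), ?_, ?_⟩
  · exact (WithLp.volume_preserving_ofLp ℝ (EuclideanSpace ℝ (Fin n))).comp
      (L.measurePreserving.comp (measurePreserving_sub_right volume m))
  · have key : ∀ y z : EuclideanSpace ℝ (Fin (n + 1)), ∀ c : ℝ, L (z - m) = WithLp.toLp 2 (c, 0) →
        (y ∈ Metric.closedBall z 1 ↔
          ((L (y - m)).fst - c) ^ 2 + ‖(L (y - m)).snd‖ ^ 2 ≤ 1) := by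
      intro y z c hz
      have : ‖y - z‖ ^ 2 = ((L (y - m)).fst - c) ^ 2 + ‖(L (y - m)).snd‖ ^ 2 := by
        rw [← L.norm_map, show y - z = (y - m) - (z - m) by abel, map_sub, hz,
          WithLp.prod_norm_sq_eq_of_L2]
        simp only [WithLp.sub_fst, WithLp.sub_snd, Real.norm_eq_abs, sq_abs,
          WithLp.toLp_fst, WithLp.toLp_snd, sub_zero]
      rw [mem_closedBall_iff_norm, ← this, sq_le_one_iff₀ (norm_nonneg _)]
    ext y
    rw [Set.mem_inter_iff, key y x _ h1, key y x' _ h2, sub_neg_eq_add]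
    rfl

/-- The indicator is needed even though the square root vanishes for negative arguments: for `n = 0`
a ball of radius `0` still has volume `1`, while the slice is empty for `|t| > 1 - δ`. -/
lemma lens_slice (n : ℕ) {δ : ℝ} (hδ : 0 ≤ δ) (t : ℝ) :
    volume.real (Prod.mk t ⁻¹' lens (EuclideanSpace ℝ (Fin n)) δ) =
      volume.real (Metric.ball (0 : EuclideanSpace ℝ (Fin n)) 1) *
        (Set.Iic (1 - δ)).indicator (fun s => (1 - (s + δ) ^ 2) ^ ((n : ℝ) / 2)) |t| := by
  have hiff : ∀ a : ℝ, ((t - δ) ^ 2 + a ≤ 1 ∧ (t + δ) ^ 2 + a ≤ 1) ↔ a ≤ 1 - (|t| + δ) ^ 2 := by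
    intro a
    rcases abs_cases t with ⟨h, h'⟩ | ⟨h, h'⟩ <;> rw [h]
    · exact ⟨fun h => by linarith [h.2], fun h => ⟨by nlinarith, by linarith⟩⟩
    · exact ⟨fun h => by linarith [h.1], fun h => ⟨by linarith, by nlinarith⟩⟩
  have habs := abs_nonneg t
  by_cases ht : |t| ≤ 1 - δ
  · have hr : 0 ≤ 1 - (|t| + δ) ^ 2 := by nlinarith
    have : Prod.mk t ⁻¹' lens (EuclideanSpace ℝ (Fin n)) δ =
        Metric.closedBall 0 √(1 - (|t| + δ) ^ 2) := by
      ext y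
      rw [mem_closedBall_zero_iff, Real.le_sqrt (norm_nonneg _) hr]
      exact hiff _
    rw [this, Measure.addHaar_real_closedBall _ _ (Real.sqrt_nonneg _),
      Set.indicator_of_mem (by exact ht), finrank_euclideanSpace_fin, mul_comm, Real.sqrt_eq_rpow,
      ← Real.rpow_natCast, ← Real.rpow_mul hr]
    congr 2
    ring
  · have : Prod.mk t ⁻¹' lens (EuclideanSpace ℝ (Fin n)) δ = ∅ := by
      ext y
      simp only [Set.mem_empty_iff_false, iff_false]
      intro h
      have := (hiff (‖y‖ ^ 2)).1 h
      nlinarith [sq_nonneg ‖y‖]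
    rw [this, Set.indicator_of_notMem (by exact ht)]
    simp

/-- The right-hand side is improper at `t = 1` when `δ = 0`; the change of variables formula for
injective maps requires no integrability. -/
lemma integral_substitution (a : ℝ) {δ : ℝ} (hδ : 0 ≤ δ) (hδ1 : δ ≤ 1) :
    2 * ∫ s in δ..1, (1 - s ^ 2) ^ a =
      ∫ t in (0:ℝ)..(1 - δ ^ 2), t ^ a * (1 - t) ^ (-(1 / 2) : ℝ) := by
  have himg : (fun s : ℝ => 1 - s ^ 2) '' Set.Ioo δ 1 = Set.Ioo 0 (1 - δ ^ 2) := by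
    ext t
    constructor
    · rintro ⟨s, ⟨h1, h2⟩, rfl⟩
      constructor <;> simp only <;> nlinarith
    · rintro ⟨h1, h2⟩
      refine ⟨√(1 - t), ⟨Real.lt_sqrt_of_sq_lt (by linarith), ?_⟩, ?_⟩
      · rw [Real.sqrt_lt' one_pos]; linarith
      · simp only
        rw [Real.sq_sqrt (by nlinarith)]; ring
  have hinj : Set.InjOn (fun s : ℝ => 1 - s ^ 2) (Set.Ioo δ 1) := by
    intro s hs u hu h
    have h' : s ^ 2 = u ^ 2 := by simp only at h; linarith
    exact (sq_eq_sq₀ (hδ.trans hs.1.le) (hδ.trans hu.1.le)).1 h'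
  have hder : ∀ s ∈ Set.Ioo δ 1,
      HasDerivWithinAt (fun s : ℝ => 1 - s ^ 2) (-(2 * s)) (Set.Ioo δ 1) s := by
    intro s _
    simpa using (((hasDerivAt_id s).pow 2).const_sub 1).hasDerivWithinAt
  rw [intervalIntegral.integral_of_le hδ1, intervalIntegral.integral_of_le (by nlinarith),
    integral_Ioc_eq_integral_Ioo, integral_Ioc_eq_integral_Ioo, ← himg,
    integral_image_eq_integral_abs_deriv_smul measurableSet_Ioo hder hinj,
    ← integral_const_mul]
  refine setIntegral_congr_fun measurableSet_Ioo fun s hs => ?_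
  have hs0 : 0 < s := hδ.trans_lt hs.1
  have : (s ^ 2) ^ (-(1 / 2) : ℝ) = s⁻¹ := by
    rw [← Real.rpow_natCast, ← Real.rpow_mul hs0.le, ← Real.rpow_neg_one]
    norm_num
  simp only [smul_eq_mul, abs_neg, sub_sub_cancel, this]
  rw [abs_of_pos (by positivity)]
  field_simp

lemma volume_lens (n : ℕ) {δ : ℝ} (hδ : 0 ≤ δ) (hδ1 : δ ≤ 1) :
    volume.real (lens (EuclideanSpace ℝ (Fin n)) δ) =
      volume.real (Metric.ball (0 : EuclideanSpace ℝ (Fin n)) 1) *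
        (2 * ∫ s in δ..1, (1 - s ^ 2) ^ ((n : ℝ) / 2)) := by
  have hfin : ∀ t : ℝ, volume (Prod.mk t ⁻¹' lens (EuclideanSpace ℝ (Fin n)) δ) < ⊤ := by
    intro t
    refine (measure_mono ?_).trans_lt
      (measure_closedBall_lt_top (x := (0 : EuclideanSpace ℝ (Fin n))) (r := 1))
    intro y hy
    have h := hy.1
    rw [mem_closedBall_zero_iff, ← sq_le_one_iff₀ (norm_nonneg _)]
    simp only at h
    nlinarith [sq_nonneg (t - δ)]
  rw [measureReal_def, Measure.volume_eq_prod, Measure.prod_apply (measurableSet_lens n δ),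
    ← integral_toReal (measurable_measure_prodMk_left (measurableSet_lens n δ)).aemeasurable
      (Filter.Eventually.of_forall hfin)]
  simp_rw [← measureReal_def, lens_slice n hδ]
  rw [integral_const_mul, integral_comp_abs, setIntegral_indicator measurableSet_Iic,
    Set.Ioi_inter_Iic, ← intervalIntegral.integral_of_le (by linarith),
    intervalIntegral.integral_comp_add_right (fun s => (1 - s ^ 2) ^ ((n : ℝ) / 2))]
  simp

/-- The numerator of `regIncBeta`, scaled by the volume of the unit ball of one dimension less,
is the volume of the intersection; taking `x = x'` gives the denominator. -/
lemma volume_inter_eq (n : ℕ) (x x' : EuclideanSpace ℝ (Fin (n + 1))) (h2 : ‖x - x'‖ ≤ 2) :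
    volume.real (Metric.closedBall x 1 ∩ Metric.closedBall x' 1) =
      volume.real (Metric.ball (0 : EuclideanSpace ℝ (Fin n)) 1) *
        ∫ t in (0:ℝ)..(1 - (‖x - x'‖ / 2) ^ 2),
          t ^ ((n : ℝ) / 2) * (1 - t) ^ (-(1 / 2) : ℝ) := by
  obtain ⟨T, hT, hpre⟩ := exists_measurePreserving_lens n x x'
  have h0 := norm_nonneg (x - x')
  rw [← hpre, measureReal_def, hT.measure_preimage (measurableSet_lens _ _).nullMeasurableSet,
    ← measureReal_def, volume_lens n (by linarith) (by linarith),
    integral_substitution _ (by linarith) (by linarith)]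

theorem unit_ball_intersection_volume (d : ℕ) (hd : 1 ≤ d)
    (x x' : EuclideanSpace ℝ (Fin d)) (Δx : ℝ) (hΔ : ‖x - x'‖ = Δx)
    (h0 : 0 ≤ Δx) (h2 : Δx ≤ 2) :
    (volume (Metric.closedBall x 1 ∩ Metric.closedBall x' 1)).toReal =
      (π ^ ((d:ℝ)/2) / Real.Gamma (1 + (d:ℝ)/2)) *
        regIncBeta ((d + 1)/2) (1/2) (1 - (Δx/2)^2) := by
  obtain ⟨n, rfl⟩ : ∃ n, d = n + 1 := ⟨d - 1, by omega⟩
  have hunit : volume.real (Metric.closedBall x 1) =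
      π ^ (((n + 1 : ℕ) : ℝ) / 2) / Real.Gamma (1 + ((n + 1 : ℕ) : ℝ) / 2) := by
    rw [measureReal_def, EuclideanSpace.volume_closedBall, Fintype.card_fin, Real.sqrt_eq_rpow,
      ← Real.rpow_natCast, ← Real.rpow_mul pi_pos.le, ENNReal.ofReal_one, one_pow, one_mul,
      ENNReal.toReal_ofReal]
    · rw [add_comm (1 : ℝ)]
      congr 2
      ring
    · have : 0 < Real.Gamma (((n + 1 : ℕ) : ℝ) / 2 + 1) := Real.Gamma_pos_of_pos (by positivity)
      positivity
  have hpos : 0 < π ^ (((n + 1 : ℕ) : ℝ) / 2) / Real.Gamma (1 + ((n + 1 : ℕ) : ℝ) / 2) := by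
    have : 0 < Real.Gamma (1 + ((n + 1 : ℕ) : ℝ) / 2) := Real.Gamma_pos_of_pos (by positivity)
    positivity
  have hV := volume_inter_eq n x x' (by linarith)
  have hB := volume_inter_eq n x x (by simp)
  rw [Set.inter_self, hunit] at hB
  rw [hΔ] at hV
  simp only [sub_self, norm_zero, zero_div, ne_eq, OfNat.ofNat_ne_zero, not_false_eq_true,
    zero_pow, sub_zero] at hB
  have ha : ((((n + 1 : ℕ) : ℝ) + 1) / 2 - 1) = (n : ℝ) / 2 := by push_cast; ring
  have hb : (1 / 2 - 1 : ℝ) = -(1 / 2) := by norm_num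
  rw [← measureReal_def, hV, regIncBeta, ha, hb]
  -- the beta integral is nonzero because the unit ball has positive volume
  have hne := right_ne_zero_of_mul (hB ▸ hpos.ne')
  rw [hB]
  field_simp
end

section
/- Let d ≥ 1, let 0 < Δx < 2, and let x, x' ∈ ℝ^d with ‖x − x'‖ ≤ Δx. Let μ and ν be the uniform probability measures on the closed unit balls centered at x and x', respectively. Then for every Borel set Ω ⊆ ℝ^d, |μ(Ω) − ν(Ω)| ≤ I_{(Δx/2)²}(1/2, (d+1)/2). -/
/-!
The difference of the two probabilities is at most `vol (B \ B') / vol B`, where `B`, `B'` are the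
two balls. Write `x' = x + s • u` with `‖u‖ = 1`. The part of `B` outside `B'` lies in
`{⟪y - x, u⟫ < s / 2}`, a region of `B` that also contains the translate by `s • u` of the cap
`{⟪y - x, u⟫ < -s / 2}` of `B`; this translate lies in `B'`, hence is disjoint from `B \ B'`.
Cancelling the volume of the cap, `vol (B \ B')` is at most the volume of the central slab
`{|⟪y - x, u⟫| ≤ s / 2}` of `B` (`volume_sdiff_le_slab`).

By Fubini in an orthonormal basis containing `u`, the slab of half-width `a` of the unit ball in
dimension `n + 1` has volume proportional to `∫ t in 0..a, √(1 - t²) ^ n` (`volume_slab`), and the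
whole ball is the slab with `a = 1`. The substitution `w = t²` turns the ratio of the two integrals
into `I_{a²}(1/2, (n + 2) / 2)` (`regIncBeta_eq`). The bound follows with `a = s / 2 ≤ Δx / 2`, the
integral being monotone in `a`.
-/


open MeasureTheory Real

/-- The uniform probability measure on a set `S` (with respect to Lebesgue measure). -/
noncomputable def unifOn {α : Type*} [MeasureSpace α] (S : Set α) : Measure α :=
  (volume S)⁻¹ • volume.restrict S

open scoped RealInnerProductSpace

/-- The part of the closed unit ball at distance at most `a` from the hyperplane through the
origin with normal vector `u`, when `u` is a unit vector. -/
def slab {E : Type*} [NormedAddCommGroup E] [InnerProductSpace ℝ E] (u : E) (a : ℝ) : Set E :=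
  {y | ‖y‖ ≤ 1 ∧ -a ≤ ⟪u, y⟫ ∧ ⟪u, y⟫ ≤ a}

/-- Splitting off the component along a unit vector `u` is a measure-preserving isometry
from `ℝⁿ⁺¹` to `ℝ × ℝⁿ`. -/
lemma exists_measurePreserving_split {n : ℕ} (u : EuclideanSpace ℝ (Fin (n + 1)))
    (hu : ‖u‖ = 1) :
    ∃ f : EuclideanSpace ℝ (Fin (n + 1)) → ℝ × EuclideanSpace ℝ (Fin n),
      MeasurePreserving f volume volume ∧
      ∀ y, (f y).1 = ⟪u, y⟫ ∧ ‖y‖ ^ 2 = (f y).1 ^ 2 + ‖(f y).2‖ ^ 2 := by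
  obtain ⟨b, hb⟩ := Orthonormal.exists_orthonormalBasis_extension_of_card_eq (𝕜 := ℝ)
    (E := EuclideanSpace ℝ (Fin (n + 1))) (ι := Fin (n + 1)) (by simp)
    (v := fun _ => u) (s := {0}) (by
      refine ⟨fun i => by simpa [Set.domRestrict] using hu, ?_⟩
      intro i j hij
      exact absurd (Subsingleton.elim i j) hij)
  have hb0 : b 0 = u := hb 0 rfl
  have h1 := b.measurePreserving_repr
  have h2 := PiLp.volume_preserving_ofLp (Fin (n + 1))
  have h3 := volume_preserving_piFinSuccAbove (fun _ : Fin (n + 1) => ℝ) 0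
  have h4 : MeasurePreserving (Prod.map (id : ℝ → ℝ) (WithLp.toLp 2 : (Fin n → ℝ) → _))
      volume volume :=
    (MeasurePreserving.id volume).prod (PiLp.volume_preserving_toLp (Fin n))
  refine ⟨_, h4.comp (h3.comp (h2.comp h1)), fun y => ?_⟩
  have hfst : b.repr y 0 = ⟪u, y⟫ := by rw [b.repr_apply_apply, hb0]
  constructor
  · simpa using hfst
  · rw [← b.repr.norm_map y, EuclideanSpace.norm_sq_eq, EuclideanSpace.norm_sq_eq,
      Fin.sum_univ_succ]
    simp [Fin.tail]

lemma volume_slab {n : ℕ} (u : EuclideanSpace ℝ (Fin (n + 1))) (hu : ‖u‖ = 1) {a : ℝ}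
    (ha0 : 0 ≤ a) (ha1 : a ≤ 1) :
    volume.real (slab u a) = 2 * (∫ t in (0 : ℝ)..a, √(1 - t ^ 2) ^ n) *
      volume.real (Metric.ball (0 : EuclideanSpace ℝ (Fin n)) 1) := by
  obtain ⟨f, hf, hfy⟩ := exists_measurePreserving_split u hu
  set T : Set (ℝ × EuclideanSpace ℝ (Fin n)) :=
    {p | p.1 ^ 2 + ‖p.2‖ ^ 2 ≤ 1 ∧ -a ≤ p.1 ∧ p.1 ≤ a} with hT
  have hTm : MeasurableSet T := by
    have h1 : Measurable fun p : ℝ × EuclideanSpace ℝ (Fin n) => p.1 ^ 2 + ‖p.2‖ ^ 2 := by fun_prop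
    exact (measurableSet_le h1 measurable_const).inter
      ((measurableSet_le measurable_const measurable_fst).inter
        (measurableSet_le measurable_fst measurable_const))
  have hST : slab u a = f ⁻¹' T := by
    ext y
    obtain ⟨h1, h2⟩ := hfy y
    simp only [slab, hT, Set.mem_ofPred_eq, Set.mem_preimage]
    rw [← h2, h1, sq_le_one_iff₀ (norm_nonneg y)]
  set κ := volume (Metric.ball (0 : EuclideanSpace ℝ (Fin n)) 1) with hκ
  set g : ℝ → ℝ := fun t => √(1 - t ^ 2) ^ n with hg
  have hgc : Continuous g := by fun_prop
  have hslice : ∀ t, volume (Prod.mk t ⁻¹' T) =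
      (Set.Icc (-a) a).indicator (fun t => ENNReal.ofReal (g t) * κ) t := by
    intro t
    by_cases ht : t ∈ Set.Icc (-a) a
    · have ht2 : 0 ≤ 1 - t ^ 2 := by nlinarith [ht.1, ht.2]
      have : Prod.mk t ⁻¹' T = Metric.closedBall 0 (√(1 - t ^ 2)) := by
        ext w
        simp only [hT, Set.mem_preimage, Set.mem_ofPred_eq, Metric.mem_closedBall, dist_zero_right,
          Real.le_sqrt (norm_nonneg w) ht2]
        exact ⟨fun h => by linarith [h.1], fun h => ⟨by linarith, ht.1, ht.2⟩⟩
      rw [this, Set.indicator_of_mem ht, Measure.addHaar_closedBall _ _ (Real.sqrt_nonneg _)]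
      simp [hg, hκ]
    · rw [Set.indicator_of_notMem ht]
      have : Prod.mk t ⁻¹' T = ∅ := by
        ext w
        simp only [hT, Set.mem_preimage, Set.mem_ofPred_eq, Set.mem_empty_iff_false, iff_false]
        exact fun h => ht h.2
      simp [this]
  have hvol : volume (slab u a) = ENNReal.ofReal (∫ t in Set.Icc (-a) a, g t) * κ := by
    rw [hST, hf.measure_preimage hTm.nullMeasurableSet, Measure.volume_eq_prod,
      Measure.prod_apply hTm, ofReal_integral_eq_lintegral_ofReal
        (hgc.continuousOn.integrableOn_compact isCompact_Icc)
        (Filter.Eventually.of_forall fun t => by positivity),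
      ← lintegral_mul_const _ (by fun_prop), ← lintegral_indicator measurableSet_Icc]
    exact lintegral_congr hslice
  have hint : ∫ t in Set.Icc (-a) a, g t = 2 * ∫ t in (0 : ℝ)..a, g t := by
    rw [integral_Icc_eq_integral_Ioc, ← intervalIntegral.integral_of_le (by linarith),
      ← intervalIntegral.integral_add_adjacent_intervals (b := 0)
        (hgc.intervalIntegrable _ _) (hgc.intervalIntegrable _ _)]
    have : ∫ t in (-a)..0, g t = ∫ t in (0 : ℝ)..a, g t := by
      have h := intervalIntegral.integral_comp_neg (a := 0) (b := a) g
      rw [neg_zero] at h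
      rw [← h]
      simp [hg]
    rw [this]; ring
  have hpos : 0 ≤ ∫ t in (0 : ℝ)..a, g t :=
    intervalIntegral.integral_nonneg ha0 fun t _ => by positivity
  rw [measureReal_def, hvol, hint, ENNReal.toReal_mul, ENNReal.toReal_ofReal (by positivity),
    measureReal_def]

/-- The substitution `w = t²` in the incomplete beta integral with parameters `1/2`,
`(n + 2) / 2`. -/
lemma integral_beta_eq (n : ℕ) {a : ℝ} (ha0 : 0 ≤ a) (ha1 : a ≤ 1) :
    ∫ w in (0 : ℝ)..a ^ 2, w ^ ((1 / 2 : ℝ) - 1) * (1 - w) ^ ((((n + 1 : ℕ) : ℝ) + 1) / 2 - 1) =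
      2 * ∫ t in (0 : ℝ)..a, √(1 - t ^ 2) ^ n := by
  have himg : (fun t : ℝ => t ^ 2) '' Set.Ioc 0 a = Set.Ioc 0 (a ^ 2) := by
    ext w
    constructor
    · rintro ⟨t, ht, rfl⟩
      exact ⟨by have := ht.1; positivity, pow_le_pow_left₀ ht.1.le ht.2 2⟩
    · intro hw
      refine ⟨√w, ⟨Real.sqrt_pos.2 hw.1, ?_⟩, Real.sq_sqrt hw.1.le⟩
      rw [Real.sqrt_le_left ha0]
      exact hw.2
  rw [intervalIntegral.integral_of_le (by positivity), intervalIntegral.integral_of_le ha0,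
    ← himg, integral_image_eq_integral_abs_deriv_smul measurableSet_Ioc
      (f' := fun t => 2 * t) (fun t _ => by simpa using (hasDerivAt_pow 2 t).hasDerivWithinAt),
    ← integral_const_mul]
  · refine setIntegral_congr_fun measurableSet_Ioc fun t ht => ?_
    have ht0 : 0 < t := ht.1
    have h1 : (t ^ 2) ^ ((1 / 2 : ℝ) - 1) = t⁻¹ := by
      rw [← Real.rpow_natCast, ← Real.rpow_mul ht0.le, ← Real.rpow_neg_one]
      norm_num
    have h2 : (1 - t ^ 2) ^ ((((n + 1 : ℕ) : ℝ) + 1) / 2 - 1) = √(1 - t ^ 2) ^ n := by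
      have : 0 ≤ 1 - t ^ 2 := by nlinarith [ht.2]
      rw [Real.sqrt_eq_rpow, ← Real.rpow_natCast _ n, ← Real.rpow_mul this]
      congr 1
      push_cast
      ring
    simp only [smul_eq_mul]
    rw [h1, h2, abs_of_pos (by positivity)]
    field_simp
  · intro s hs t ht hst
    exact (pow_left_inj₀ hs.1.le ht.1.le two_ne_zero).1 hst

lemma regIncBeta_eq (n : ℕ) {a : ℝ} (ha0 : 0 ≤ a) (ha1 : a ≤ 1) :
    regIncBeta (1 / 2) ((((n + 1 : ℕ) : ℝ) + 1) / 2) (a ^ 2) =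
      (2 * ∫ t in (0 : ℝ)..a, √(1 - t ^ 2) ^ n) / (2 * ∫ t in (0 : ℝ)..1, √(1 - t ^ 2) ^ n) := by
  have h := integral_beta_eq n zero_le_one le_rfl
  rw [one_pow] at h
  rw [regIncBeta, integral_beta_eq n ha0 ha1, h]

lemma slab_one {E : Type*} [NormedAddCommGroup E] [InnerProductSpace ℝ E] (u : E) (hu : ‖u‖ = 1) :
    slab u 1 = Metric.closedBall 0 1 := by
  ext y
  simp only [slab, Set.mem_ofPred_eq, Metric.mem_closedBall, dist_zero_right,
    and_iff_left_iff_imp]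
  intro hy
  have := abs_real_inner_le_norm u y
  rw [hu, one_mul] at this
  exact abs_le.1 (this.trans hy)

/-- The lune `B \ B'` is disjoint from the translate by `s • u` of the cap
`{⟪u, y⟫ < -s / 2}` of `B`, and both lie in the part `{⟪u, y⟫ < s / 2}` of `B`, which is
covered by the cap and a slab. -/
lemma volume_sdiff_le_slab {n : ℕ} (x u : EuclideanSpace ℝ (Fin n)) (hu : ‖u‖ = 1) {s : ℝ}
    (hs : 0 ≤ s) :
    volume.real (Metric.closedBall x 1 \ Metric.closedBall (x + s • u) 1) ≤
      volume.real (slab u (s / 2)) := by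
  set B : Set (EuclideanSpace ℝ (Fin n)) := Metric.closedBall 0 1 with hB
  set L : Set (EuclideanSpace ℝ (Fin n)) := B \ Metric.closedBall (s • u) 1 with hL
  set H : Set (EuclideanSpace ℝ (Fin n)) := B ∩ {y | ⟪u, y⟫ < s / 2} with hH
  set C : Set (EuclideanSpace ℝ (Fin n)) := B ∩ {y | ⟪u, y⟫ < -(s / 2)} with hC
  have hCm : MeasurableSet C := Metric.isClosed_closedBall.measurableSet.inter
    (isOpen_lt (by fun_prop) (by fun_prop)).measurableSet
  have hτ := measurePreserving_sub_right (volume : Measure (EuclideanSpace ℝ (Fin n)))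
  have hLx : (fun y => y - x) ⁻¹' L = Metric.closedBall x 1 \ Metric.closedBall (x + s • u) 1 := by
    ext y
    simp [hL, hB, dist_eq_norm, sub_sub]
  have hLm : MeasurableSet L :=
    Metric.isClosed_closedBall.measurableSet.diff Metric.isClosed_closedBall.measurableSet
  have hnorm : ∀ y, ‖y - s • u‖ ^ 2 = ‖y‖ ^ 2 - 2 * s * ⟪u, y⟫ + s ^ 2 := by
    intro y
    rw [norm_sub_sq_real, inner_smul_right, real_inner_comm, norm_smul, hu, mul_one,
      Real.norm_eq_abs, sq_abs]
    ring
  have hLH : L ⊆ H := by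
    rintro y ⟨hy, hy'⟩
    refine ⟨hy, ?_⟩
    simp only [hB, Metric.mem_closedBall, dist_eq_norm, sub_zero, not_le] at hy hy'
    have h1 : ‖y‖ ^ 2 ≤ 1 := by nlinarith [norm_nonneg y]
    have h2 : 1 < ‖y - s • u‖ ^ 2 := by nlinarith
    rw [hnorm] at h2
    by_contra h
    simp only [Set.mem_ofPred_eq, not_lt] at h
    nlinarith
  have hCH : (fun y => y - s • u) ⁻¹' C ⊆ H := by
    rintro y ⟨hy, hy'⟩
    simp only [hB, Metric.mem_closedBall, dist_zero_right, Set.mem_ofPred_eq, inner_sub_right,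
      inner_smul_right, real_inner_self_eq_norm_sq, hu] at hy hy'
    have h1 : ‖y - s • u‖ ^ 2 ≤ 1 := by nlinarith [norm_nonneg (y - s • u)]
    rw [hnorm] at h1
    have h3 : ⟪u, y⟫ < s / 2 := by linarith
    refine ⟨?_, h3⟩
    simp only [hB, Metric.mem_closedBall, dist_zero_right]
    rw [← sq_le_one_iff₀ (norm_nonneg y)]
    nlinarith
  have hdisj : Disjoint L ((fun y => y - s • u) ⁻¹' C) := by
    rw [Set.disjoint_left]
    rintro y ⟨_, hy⟩ ⟨hy', _⟩
    simp only [hB, Metric.mem_closedBall, dist_eq_norm, sub_zero] at hy hy'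
    exact hy hy'
  have hHC : H ⊆ C ∪ slab u (s / 2) := by
    rintro y ⟨hy, hy'⟩
    by_cases h : ⟪u, y⟫ < -(s / 2)
    · exact Or.inl ⟨hy, h⟩
    · exact Or.inr ⟨by simpa [hB] using hy, not_lt.1 h, le_of_lt hy'⟩
  have hBfin : volume B ≠ ⊤ := measure_closedBall_lt_top.ne
  have hCfin : volume C ≠ ⊤ := measure_ne_top_of_subset Set.inter_subset_left hBfin
  have hSfin : volume (slab u (s / 2)) ≠ ⊤ :=
    measure_ne_top_of_subset (fun y hy => by simpa [hB] using hy.1) hBfin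
  have key : volume L + volume C ≤ volume (slab u (s / 2)) + volume C := by
    calc volume L + volume C = volume L + volume ((fun y => y - s • u) ⁻¹' C) := by
          rw [(hτ (s • u)).measure_preimage hCm.nullMeasurableSet]
      _ = volume (L ∪ (fun y => y - s • u) ⁻¹' C) :=
          (measure_union hdisj ((hτ (s • u)).measurable hCm)).symm
      _ ≤ volume (C ∪ slab u (s / 2)) := measure_mono ((Set.union_subset hLH hCH).trans hHC)
      _ ≤ volume C + volume (slab u (s / 2)) := measure_union_le _ _
      _ = _ := add_comm _ _
  rw [measureReal_def, measureReal_def, ← hLx, (hτ x).measure_preimage hLm.nullMeasurableSet]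
  exact ENNReal.toReal_mono hSfin ((ENNReal.add_le_add_iff_right hCfin).1 key)

lemma volume_sdiff_div_le {n : ℕ} {δ : ℝ} (h0 : 0 < δ) (h2 : δ < 2)
    (x x' : EuclideanSpace ℝ (Fin (n + 1))) (hδ : ‖x - x'‖ ≤ δ) :
    volume.real (Metric.closedBall x 1 \ Metric.closedBall x' 1) /
      volume.real (Metric.closedBall (0 : EuclideanSpace ℝ (Fin (n + 1))) 1) ≤
      regIncBeta (1 / 2) ((((n + 1 : ℕ) : ℝ) + 1) / 2) ((δ / 2) ^ 2) := by
  -- if `x = x'`, any unit vector serves as the direction `u`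
  obtain ⟨u, hu, hx'⟩ : ∃ u : EuclideanSpace ℝ (Fin (n + 1)), ‖u‖ = 1 ∧
      x' = x + ‖x - x'‖ • u := by
    by_cases h : x = x'
    · obtain ⟨u, hu⟩ := exists_norm_eq (EuclideanSpace ℝ (Fin (n + 1))) zero_le_one
      exact ⟨u, hu, by simp [h]⟩
    · have hne : ‖x - x'‖ ≠ 0 := norm_ne_zero_iff.2 (sub_ne_zero.2 h)
      refine ⟨‖x - x'‖⁻¹ • (x' - x), ?_, ?_⟩
      · rw [norm_smul, norm_inv, norm_norm, norm_sub_rev x' x, inv_mul_cancel₀ hne]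
      · rw [smul_smul, mul_inv_cancel₀ hne, one_smul, add_sub_cancel]
  set s := ‖x - x'‖ with hs
  have hs0 : 0 ≤ s := norm_nonneg _
  set κ := volume.real (Metric.ball (0 : EuclideanSpace ℝ (Fin n)) 1) with hκ
  have hκ0 : 0 < κ := ENNReal.toReal_pos (Metric.measure_ball_pos _ _ one_pos).ne'
    measure_ball_lt_top.ne
  have hgc : Continuous fun t : ℝ => √(1 - t ^ 2) ^ n := by fun_prop
  have hmono : ∫ t in (0 : ℝ)..s / 2, √(1 - t ^ 2) ^ n ≤ ∫ t in (0 : ℝ)..δ / 2, √(1 - t ^ 2) ^ n :=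
    intervalIntegral.integral_mono_interval le_rfl (by linarith) (by linarith)
      (Filter.Eventually.of_forall fun t => by positivity) (hgc.intervalIntegrable _ _)
  have hone : 0 ≤ ∫ t in (0 : ℝ)..1, √(1 - t ^ 2) ^ n :=
    intervalIntegral.integral_nonneg zero_le_one fun t _ => by positivity
  rw [← slab_one u hu, volume_slab u hu zero_le_one le_rfl,
    regIncBeta_eq n (by linarith) (by linarith),
    ← mul_div_mul_right (2 * ∫ t in (0 : ℝ)..δ / 2, √(1 - t ^ 2) ^ n) _ hκ0.ne']
  refine div_le_div_of_nonneg_right ?_ (by positivity)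
  calc _ ≤ volume.real (slab u (s / 2)) := by
        simpa only [← hx'] using volume_sdiff_le_slab x u hu hs0
    _ = _ := volume_slab u hu (by linarith) (by linarith)
    _ ≤ _ := mul_le_mul_of_nonneg_right (by linarith) hκ0.le

lemma unifOn_closedBall_toReal {d : ℕ} (x : EuclideanSpace ℝ (Fin d))
    {Ω : Set (EuclideanSpace ℝ (Fin d))} (hΩ : MeasurableSet Ω) :
    (unifOn (Metric.closedBall x 1) Ω).toReal =
      volume.real (Ω ∩ Metric.closedBall x 1) /
        volume.real (Metric.closedBall (0 : EuclideanSpace ℝ (Fin d)) 1) := by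
  rw [unifOn, Measure.smul_apply, smul_eq_mul, Measure.restrict_apply hΩ, ENNReal.toReal_mul,
    ENNReal.toReal_inv, Measure.addHaar_closedBall_center, measureReal_def, measureReal_def]
  ring

lemma unifOn_sub_le {n : ℕ} {δ : ℝ} (h0 : 0 < δ) (h2 : δ < 2)
    (x x' : EuclideanSpace ℝ (Fin (n + 1))) (hδ : ‖x - x'‖ ≤ δ)
    {Ω : Set (EuclideanSpace ℝ (Fin (n + 1)))} (hΩ : MeasurableSet Ω) :
    (unifOn (Metric.closedBall x 1) Ω).toReal - (unifOn (Metric.closedBall x' 1) Ω).toReal ≤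
      regIncBeta (1 / 2) ((((n + 1 : ℕ) : ℝ) + 1) / 2) ((δ / 2) ^ 2) := by
  refine le_trans ?_ (volume_sdiff_div_le h0 h2 x x' hδ)
  rw [unifOn_closedBall_toReal x hΩ, unifOn_closedBall_toReal x' hΩ, ← sub_div]
  gcongr
  rw [sub_le_iff_le_add]
  have hfin : ∀ z : EuclideanSpace ℝ (Fin (n + 1)), volume (Metric.closedBall z 1) ≠ ⊤ :=
    fun z => measure_closedBall_lt_top.ne
  refine (measureReal_mono ?_ ?_).trans (measureReal_union_le _ _)
  · rintro y ⟨hy, hyx⟩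
    by_cases h : y ∈ Metric.closedBall x' 1
    · exact Or.inr ⟨hy, h⟩
    · exact Or.inl ⟨hyx, h⟩
  · exact measure_union_ne_top (measure_ne_top_of_subset Set.sdiff_subset (hfin x))
      (measure_ne_top_of_subset Set.inter_subset_right (hfin x'))

theorem single_step_privacy (d : ℕ) (hd : 1 ≤ d) (Δx : ℝ) (h0 : 0 < Δx) (h2 : Δx < 2)
    (x x' : EuclideanSpace ℝ (Fin d)) (hΔ : ‖x - x'‖ ≤ Δx)
    (μ ν : Measure (EuclideanSpace ℝ (Fin d)))
    (hμ : μ = unifOn (Metric.closedBall x 1)) (hν : ν = unifOn (Metric.closedBall x' 1))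
    (Ω : Set (EuclideanSpace ℝ (Fin d))) (hΩ : MeasurableSet Ω) :
    |(μ Ω).toReal - (ν Ω).toReal| ≤ regIncBeta (1/2) ((d + 1)/2) ((Δx/2)^2) := by
  obtain ⟨n, rfl⟩ : ∃ n, d = n + 1 := ⟨d - 1, by omega⟩
  subst hμ hν
  rw [abs_sub_le_iff]
  exact ⟨unifOn_sub_le h0 h2 x x' hΔ hΩ,
    unifOn_sub_le h0 h2 x' x (by rwa [norm_sub_rev]) hΩ⟩
end

section
/- Let a > 0, let n ≥ 1 be a natural number, and let z ∈ [0,1]. Then the regularized incomplete beta function satisfies I_z(a, n) = z^a · Σ_{k=0}^{n−1} ((a)_k · (1−z)^k) / k!, where (a)_k = a(a+1)⋯(a+k−1) is the Pochhammer rising factorial (with (a)_0 = 1). -/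
/-!
With `S z = ∑_{k<n} (a)_k (1 - z)^k / k!` and `c = (a)_n / (n - 1)!`, the sum telescopes in the
identity `a S(z) + z S'(z) = c (1 - z)^(n - 1)`, so that `z ^ a S(z)` is a primitive of
`c z ^ (a - 1) (1 - z) ^ (n - 1)` on `(0, 1)`, continuous on `[0, 1]` and vanishing at `0`. Hence
`c ∫₀ᶻ t ^ (a - 1) (1 - t) ^ (n - 1) dt = z ^ a S(z)`. Since `S(1) = 1`, taking `z = 1` shows that
`c` is the reciprocal of the complete beta integral, and the expansion follows.
-/

open Real

/-- The truncated binomial series of `(1 - (1 - z)) ^ (-a)`, with `n` terms. -/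
noncomputable def truncSum (a : ℝ) (n : ℕ) (z : ℝ) : ℝ :=
  ∑ k ∈ Finset.range n, ((ascPochhammer ℝ k).eval a * (1 - z) ^ k) / (Nat.factorial k : ℝ)

/-- The telescoping identity `a S + z S' = (a)_{m+1} / m! (1 - z)^m` for `S = truncSum a (m + 1)`. -/
lemma exists_hasDerivAt_truncSum (a : ℝ) (m : ℕ) (z : ℝ) :
    ∃ d, HasDerivAt (truncSum a (m + 1)) d z ∧
      a * truncSum a (m + 1) z + z * d =
        (ascPochhammer ℝ (m + 1)).eval a / (Nat.factorial m : ℝ) * (1 - z) ^ m := by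
  induction m with
  | zero =>
    refine ⟨0, ?_, by simp [truncSum]⟩
    have h : truncSum a (0 + 1) = fun _ => 1 := by ext; simp [truncSum]
    rw [h]
    exact hasDerivAt_const z 1
  | succ m ih =>
    obtain ⟨d, hd, h⟩ := ih
    have hS : truncSum a (m + 1 + 1) = fun x => truncSum a (m + 1) x +
        ((ascPochhammer ℝ (m + 1)).eval a * (1 - x) ^ (m + 1)) / (Nat.factorial (m + 1) : ℝ) := by
      ext x
      rw [truncSum, Finset.sum_range_succ, truncSum]
    have hp := ((((hasDerivAt_id z).const_sub 1).pow (m + 1)).const_mul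
      ((ascPochhammer ℝ (m + 1)).eval a)).div_const (Nat.factorial (m + 1) : ℝ)
    refine ⟨_, by rw [hS]; exact hd.add hp, ?_⟩
    have hf : (Nat.factorial m : ℝ) ≠ 0 := by positivity
    have hm : (m : ℝ) + 1 ≠ 0 := by positivity
    rw [hS, ascPochhammer_succ_eval (m + 1)]
    simp only [id, Nat.add_sub_cancel, Nat.factorial_succ]
    push_cast
    rw [mul_add, mul_add, add_add_add_comm, h]
    field_simp
    ring

lemma continuous_truncSum (a : ℝ) (n : ℕ) : Continuous (truncSum a n) := by
  unfold truncSum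
  fun_prop

lemma mul_integral_eq_truncSum (a : ℝ) (ha : 0 < a) (m : ℕ) (z : ℝ) (hz : 0 ≤ z) :
    (ascPochhammer ℝ (m + 1)).eval a / (Nat.factorial m : ℝ) *
      (∫ t in (0:ℝ)..z, t ^ (a - 1) * (1 - t) ^ m) = z ^ a * truncSum a (m + 1) z := by
  rw [← intervalIntegral.integral_const_mul]
  rw [intervalIntegral.integral_eq_sub_of_hasDerivAt_of_le hz
    (f := fun t => t ^ a * truncSum a (m + 1) t)]
  · simp [Real.zero_rpow ha.ne']
  · exact ((Real.continuous_rpow_const ha.le).mul (continuous_truncSum a _)).continuousOn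
  · intro t ht
    obtain ⟨d, hd, h⟩ := exists_hasDerivAt_truncSum a m t
    convert! (Real.hasDerivAt_rpow_const (p := a) (Or.inl ht.1.ne')).mul hd using 1
    have ht' : t ^ a = t ^ (a - 1) * t := by
      rw [← Real.rpow_add_one ht.1.ne', sub_add_cancel]
    rw [ht']
    linear_combination (-t ^ (a - 1)) * h
  · refine IntervalIntegrable.const_mul ?_ _
    refine (intervalIntegral.intervalIntegrable_rpow' (by linarith)).mul_continuousOn ?_
    fun_prop

theorem regIncBeta_nat_expansion (a : ℝ) (ha : 0 < a) (n : ℕ) (hn : 1 ≤ n)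
    (z : ℝ) (hz : z ∈ Set.Icc (0:ℝ) 1) :
    regIncBeta a n z =
      z ^ a * ∑ k ∈ Finset.range n, ((ascPochhammer ℝ k).eval a * (1 - z) ^ k) / (Nat.factorial k : ℝ) := by
  obtain ⟨m, rfl⟩ : ∃ m, n = m + 1 := ⟨n - 1, by omega⟩
  have hone : truncSum a (m + 1) 1 = 1 := by
    rw [truncSum, Finset.sum_range_succ']
    simp
  have h1 := mul_integral_eq_truncSum a ha m 1 zero_le_one
  have h2 := mul_integral_eq_truncSum a ha m z hz.1
  rw [hone, Real.one_rpow, one_mul] at h1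
  change _ = z ^ a * truncSum a (m + 1) z
  simp only [regIncBeta, Nat.cast_add, Nat.cast_one, add_sub_cancel_right, Real.rpow_natCast]
  rw [div_eq_iff (right_ne_zero_of_mul_eq_one h1), ← h2]
  linear_combination (-∫ t in (0:ℝ)..z, t ^ (a - 1) * (1 - t) ^ m) * h1
end

section
/- Let 0 < Δx < 2 and let d, d' be odd positive integers with d < d'. Then I_{(Δx/2)²}(1/2, (d+1)/2) < I_{(Δx/2)²}(1/2, (d'+1)/2). That is, for a fixed gradient distance Δx, the per-step privacy parameter δ of unit-ball perturbation strictly increases (privacy strictly decreases) as the dimension increases. -/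
/-!
The distribution function `I_z(a, b)` is strictly increasing in `b ≥ 1`, for any `a > 0` and
`0 < z < 1`. The density for `b'` is the one for `b` times the weight `(1 - t) ^ (b' - b)`, which is
strictly decreasing in `t`. Hence, with `c = (1 - z) ^ (b' - b)`, passing from `b` to `b'` multiplies
the mass of `(0, z)` by more than `c` and the mass of `(z, 1)` by less than `c`, so the fraction of
mass in `(0, z)` grows (`regIncBeta_lt_of_lt`).
-/

open Real

open intervalIntegral MeasureTheory

/-- The restriction `1 ≤ b` makes the factor `(1 - t) ^ (b - 1)` continuous, so that only the
singularity at `0` matters. -/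
lemma intervalIntegrable_beta {a b : ℝ} (ha : 0 < a) (hb : 1 ≤ b) (x y : ℝ) :
    IntervalIntegrable (fun t : ℝ => t ^ (a - 1) * (1 - t) ^ (b - 1)) volume x y := by
  refine (intervalIntegrable_rpow' (by linarith)).mul_continuousOn ?_
  exact ((continuous_const.sub continuous_id).rpow_const
    fun _ => Or.inr (by linarith)).continuousOn

lemma beta_integral_pos {a b : ℝ} (ha : 0 < a) (hb : 1 ≤ b) {x y : ℝ} (hx : 0 ≤ x)
    (hxy : x < y) (hy : y ≤ 1) :
    0 < ∫ t in x..y, t ^ (a - 1) * (1 - t) ^ (b - 1) := by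
  refine intervalIntegral_pos_of_pos_on (intervalIntegrable_beta ha hb x y) ?_ hxy
  rintro t ⟨h1, h2⟩
  exact mul_pos (rpow_pos_of_pos (by linarith) _) (rpow_pos_of_pos (by linarith) _)

lemma beta_integrand_eq {a b b' t : ℝ} (ht : t < 1) :
    t ^ (a - 1) * (1 - t) ^ (b' - 1) =
      (t ^ (a - 1) * (1 - t) ^ (b - 1)) * (1 - t) ^ (b' - b) := by
  rw [mul_assoc, ← rpow_add (by linarith)]
  congr 2
  ring

theorem regIncBeta_lt_of_lt {a b b' z : ℝ} (ha : 0 < a) (hb : 1 ≤ b) (hbb : b < b')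
    (hz0 : 0 < z) (hz1 : z < 1) : regIncBeta a b z < regIncBeta a b' z := by
  have hb' : 1 ≤ b' := by linarith
  have hA := beta_integral_pos ha hb le_rfl hz0 hz1.le
  have hB := beta_integral_pos ha hb hz0.le hz1 le_rfl
  have hA' := beta_integral_pos ha hb' le_rfl hz0 hz1.le
  have hB' := beta_integral_pos ha hb' hz0.le hz1 le_rfl
  have head : (1 - z) ^ (b' - b) * (∫ t in (0:ℝ)..z, t ^ (a - 1) * (1 - t) ^ (b - 1)) <
      ∫ t in (0:ℝ)..z, t ^ (a - 1) * (1 - t) ^ (b' - 1) := by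
    have hi := (intervalIntegrable_beta ha hb 0 z).const_mul ((1 - z) ^ (b' - b))
    have hi' := intervalIntegrable_beta ha hb' 0 z
    rw [← intervalIntegral.integral_const_mul, ← sub_pos, ← intervalIntegral.integral_sub hi' hi]
    refine intervalIntegral_pos_of_pos_on (hi'.sub hi) ?_ hz0
    rintro t ⟨h1, h2⟩
    have hf : 0 < t ^ (a - 1) * (1 - t) ^ (b - 1) :=
      mul_pos (rpow_pos_of_pos h1 _) (rpow_pos_of_pos (by linarith) _)
    have hw : (1 - z) ^ (b' - b) < (1 - t) ^ (b' - b) :=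
      rpow_lt_rpow (by linarith) (by linarith) (by linarith)
    rw [beta_integrand_eq (b := b) (b' := b') (h2.trans hz1)]
    nlinarith
  have tail : (∫ t in z..1, t ^ (a - 1) * (1 - t) ^ (b' - 1)) <
      (1 - z) ^ (b' - b) * (∫ t in z..1, t ^ (a - 1) * (1 - t) ^ (b - 1)) := by
    have hi := (intervalIntegrable_beta ha hb z 1).const_mul ((1 - z) ^ (b' - b))
    have hi' := intervalIntegrable_beta ha hb' z 1
    rw [← intervalIntegral.integral_const_mul, ← sub_pos, ← intervalIntegral.integral_sub hi hi']
    refine intervalIntegral_pos_of_pos_on (hi.sub hi') ?_ hz1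
    rintro t ⟨h1, h2⟩
    have hf : 0 < t ^ (a - 1) * (1 - t) ^ (b - 1) :=
      mul_pos (rpow_pos_of_pos (by linarith) _) (rpow_pos_of_pos (by linarith) _)
    have hw : (1 - t) ^ (b' - b) < (1 - z) ^ (b' - b) :=
      rpow_lt_rpow (by linarith) (by linarith) (by linarith)
    rw [beta_integrand_eq (b := b) (b' := b') h2]
    nlinarith
  unfold regIncBeta
  rw [← integral_add_adjacent_intervals (intervalIntegrable_beta ha hb 0 z)
      (intervalIntegrable_beta ha hb z 1),
    ← integral_add_adjacent_intervals (intervalIntegrable_beta ha hb' 0 z)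
      (intervalIntegrable_beta ha hb' z 1),
    div_lt_div_iff₀ (by linarith) (by linarith)]
  have h1 := mul_lt_mul_of_pos_left tail hA
  have h2 := mul_lt_mul_of_pos_right head hB
  linarith

theorem privacy_decreases_with_dimension (Δx : ℝ) (h0 : 0 < Δx) (h2 : Δx < 2)
    (d d' : ℕ) (hd : 1 ≤ d) (hdodd : Odd d) (hd'odd : Odd d') (hdd' : d < d') :
    regIncBeta (1/2) ((d + 1)/2) ((Δx/2)^2) <
      regIncBeta (1/2) ((d' + 1)/2) ((Δx/2)^2) := by
  have hd1 : (1 : ℝ) ≤ d := by exact_mod_cast hd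
  have hlt : (d : ℝ) < d' := by exact_mod_cast hdd'
  exact regIncBeta_lt_of_lt (by norm_num) (by linarith) (by linarith) (by positivity)
    (by nlinarith)
end
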